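/- Let (U, d) be a metric space, μ a Borel probability measure on U, g : U → U a Borel map, ℓ : U → (0, ∞) a measurable function, and (μ_x)_{x ∈ U} a family of Borel probability measures that disintegrates μ, i.e. μ(S) = ∫ μ_x(S) dμ(x) for every Borel set S. Let C ≥ 1, b > 0, k > 0, c ∈ [0, 1/2] be constants and (Γ(x))_{x ∈ U} a family of Borel sets with μ_x(Γ(x)) = 1 for every x. Assume: (i) μ({x : ℓ(x) < ε}) ≤ C·ε^b for every ε ∈ (0,1); (ii) for every x, d(g(y), g(y')) ≤ c·d(y, y') for all y, y' ∈ Γ(x); (iii) for every x, every δ > 0 and every Borel set S ⊆ U with diam(S) ≤ δ, μ_x(S) ≤ C·(δ/ℓ(x))^k. Then for every ε ∈ (0,1): μ({z ∈ U : d(g(z), z) ≤ ε}) ≤ C·(1 + 4^k)·ε^{b·k/(b + k)}. -/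

import Mathlib

open MeasureTheory Metric

/-!
On a leaf `Γ x` the almost fixed points `z`, those with `d(g z, z) ≤ ε`, form a set of diameter at
most `2ε / (1 - c)`, because `g` contracts `Γ x` by the factor `c`. Hence their conditional measure
is at most `C (2ε / ((1 - c) ℓ x)) ^ k`. This is small on the long leaves `ℓ x ≥ t`, while the short
leaves carry at most `C t ^ b`; integrating over `x`, the choice `t = ε ^ (k / (b + k))` balances
the two contributions.

The disintegration formula concerns measurable sets only, and in a nonseparable space it is not
clear that `{z | d(g z, z) ≤ ε}` is Borel: its complement is a countable union of sets
`⋃ i, V i ∩ S i` with uncountably many disjoint pieces `V i` and Borel sets `S i`. Such a union is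
Borel as soon as the Borel ranks of the `S i` are bounded by some `a < ω₁`. Ulam's argument provides
an `a` for which the pieces `V i` with `S i` of larger rank form a null set together, so the union
is null measurable in any case.
-/

universe u

section Ulam

open Ordinal

/-- Ulam's matrix argument: were every tail charged, each `a` would have an `n` for which the
points `x` with `a < r x` and `f (r x) a = n` have positive measure, `f b` being an injection of
`Iio b` into `ℕ`. For fixed `n` these sets are disjoint, so only countably many `a` could occur. -/
theorem exists_measure_preimage_Ioi_eq_zero {Ω I : Type*} [MeasurableSpace Ω] [Preorder I]
    [Uncountable I] (hI : ∀ a : I, (Set.Iio a).Countable) (μ : Measure Ω) [SFinite μ] {r : Ω → I}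
    (hr : ∀ A : Set I, MeasurableSet (r ⁻¹' A)) :
    ∃ a, μ (r ⁻¹' Set.Ioi a) = 0 := by
  by_contra! tail_charged
  choose f hf using fun b => Set.countable_iff_exists_injOn.1 (hI b)
  let cell (n : ℕ) (a : I) : Set Ω := r ⁻¹' {b | a < b ∧ f b a = n}
  have exists_cell_pos (a : I) : ∃ n, 0 < μ (cell n a) := by
    by_contra! cell_null
    have tail_subset : r ⁻¹' Set.Ioi a ⊆ ⋃ n, cell n a :=
      fun x hx => Set.mem_iUnion.2 ⟨f (r x) a, hx, rfl⟩
    exact tail_charged a (measure_mono_null tail_subset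
      (measure_iUnion_null fun n => nonpos_iff_eq_zero.1 (cell_null n)))
  choose n hn using exists_cell_pos
  have cell_disjoint (m : ℕ) : Pairwise (Function.onFun Disjoint (cell m)) := by
    intro a a' haa'
    refine Set.disjoint_left.2 ?_
    rintro x ⟨ha, hfa⟩ ⟨ha', hfa'⟩
    exact haa' (hf (r x) ha ha' (hfa.trans hfa'.symm))
  have fiber_countable (m : ℕ) : {a | n a = m}.Countable := by
    refine (Measure.countable_meas_pos_of_disjoint_iUnion (μ := μ) (fun a => hr _)
      (cell_disjoint m)).mono ?_
    rintro a rfl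
    exact hn a
  refine Set.not_countable_univ ((Set.countable_iUnion fiber_countable).mono fun a _ => ?_)
  exact Set.mem_iUnion.2 ⟨n a, rfl⟩

theorem countable_Iio_of_lt_omega_one {a : Ordinal.{u}} (ha : a < ω₁) : (Set.Iio a).Countable := by
  rwa [← Cardinal.le_aleph0_iff_set_countable, Cardinal.mk_Iio_ordinal, Cardinal.lift_le_aleph0,
    ← Order.lt_succ_iff, Cardinal.succ_aleph0, ← Cardinal.lt_ord, Cardinal.ord_aleph]

theorem uncountable_Iio_omega_one : Uncountable (Set.Iio (ω₁ : Ordinal.{u})) := by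
  rw [← not_countable_iff, ← Cardinal.mk_le_aleph0_iff, Cardinal.mk_Iio_ordinal]
  simp

end Ulam

section Gluing

open Ordinal MeasurableSpace

variable {α ι : Type*} [MeasurableSpace α] {p : α → ι}

/-- Sets of the class `C` glue measurably along the partition of `α` into the fibres of `p` if
`⋃ i ∈ J, p ⁻¹' {i} ∩ S i` is measurable whenever `S i ∈ C` for all `i ∈ J`, however large `J` is.
The union is written as `{z | p z ∈ J ∧ z ∈ S (p z)}`; the set `J` of indices in use is there so
that a family can be split according to the kinds of its members. -/
def GluesMeasurably (p : α → ι) (C : Set (Set α)) : Prop :=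
  ∀ (J : Set ι) (S : ι → Set α), (∀ i ∈ J, S i ∈ C) → MeasurableSet {z | p z ∈ J ∧ z ∈ S (p z)}

namespace GluesMeasurably

variable {C D : Set (Set α)}

theorem measurableSet_preimage (hC : GluesMeasurably p C) (huniv : Set.univ ∈ C) (J : Set ι) :
    MeasurableSet (p ⁻¹' J) := by
  simpa [Set.preimage] using hC J (fun _ => Set.univ) fun _ _ => huniv

theorem singleton_empty : GluesMeasurably p {∅} := by
  intro J S hS
  have glued_empty : {z | p z ∈ J ∧ z ∈ S (p z)} = ∅ :=
    Set.eq_empty_of_forall_notMem fun z ⟨hJ, hz⟩ => by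
      simp [Set.mem_singleton_iff.1 (hS _ hJ)] at hz
  exact glued_empty ▸ MeasurableSet.empty

theorem iUnion {κ : Type*} [Countable κ] {C : κ → Set (Set α)}
    (hC : ∀ k, GluesMeasurably p (C k)) : GluesMeasurably p (⋃ k, C k) := by
  intro J S hS
  convert MeasurableSet.iUnion fun k => hC k {i ∈ J | S i ∈ C k} S fun i hi => hi.2
  ext z
  simp only [Set.mem_iUnion, Set.mem_ofPred_eq]
  constructor
  · rintro ⟨hJ, hz⟩
    obtain ⟨k, hk⟩ := Set.mem_iUnion.1 (hS _ hJ)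
    exact ⟨k, ⟨hJ, hk⟩, hz⟩
  · rintro ⟨k, ⟨hJ, -⟩, hz⟩
    exact ⟨hJ, hz⟩

theorem union (hC : GluesMeasurably p C) (hD : GluesMeasurably p D) :
    GluesMeasurably p (C ∪ D) := by
  rw [Set.union_eq_iUnion]
  exact iUnion (Bool.forall_bool.2 ⟨hD, hC⟩)

theorem image_compl (hp : ∀ J : Set ι, MeasurableSet (p ⁻¹' J)) (hC : GluesMeasurably p C) :
    GluesMeasurably p (compl '' C) := by
  intro J S hS
  convert (hp J).diff (hC J (fun i => (S i)ᶜ) fun i hi => (Set.mem_compl_image _ _).1 (hS i hi))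
  ext z
  simp only [Set.mem_ofPred_eq, Set.mem_sdiff, Set.mem_preimage, Set.mem_compl_iff]
  tauto

theorem range_iUnion (hC : GluesMeasurably p C) :
    GluesMeasurably p (Set.range fun f : ℕ → C => ⋃ n, (f n : Set α)) := by
  intro J S hS
  have exists_pieces : ∀ i ∈ J, ∃ T : ℕ → Set α, (∀ n, T n ∈ C) ∧ ⋃ n, T n = S i := by
    intro i hi
    obtain ⟨f, hf⟩ := hS i hi
    exact ⟨fun n => f n, fun n => (f n).2, hf⟩
  choose! T hTC hTS using exists_pieces
  convert MeasurableSet.iUnion fun n => hC J (fun i => T i n) fun i hi => hTC i hi n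
  ext z
  simp only [Set.mem_ofPred_eq, Set.mem_iUnion, exists_and_left]
  exact and_congr_right fun hz => by rw [← hTS _ hz, Set.mem_iUnion]

theorem generateMeasurableRec (hp : ∀ J : Set ι, MeasurableSet (p ⁻¹' J))
    (hC : GluesMeasurably p C) {a : Ordinal.{u}} (ha : a < ω₁) :
    GluesMeasurably p (generateMeasurableRec C a) := by
  induction a using WellFoundedLT.induction with
  | ind a ih =>
    have lower : GluesMeasurably p (⋃ b < a, MeasurableSpace.generateMeasurableRec C b) := by
      have := (countable_Iio_of_lt_omega_one ha).to_subtype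
      rw [← Set.iUnion_subtype (fun b => b < a)
        fun b => MeasurableSpace.generateMeasurableRec C b.1]
      exact iUnion (κ := Set.Iio a) fun b => ih b b.2 (b.2.trans ha)
    unfold MeasurableSpace.generateMeasurableRec
    exact ((hC.union singleton_empty).union (lower.image_compl hp)).union lower.range_iUnion

theorem nullMeasurableSet (hp : ∀ J : Set ι, MeasurableSet (p ⁻¹' J)) (hC : GluesMeasurably p C)
    (μ : Measure α) [SFinite μ] {S : ι → Set α} (hS : ∀ i, MeasurableSet[generateFrom C] (S i)) :
    NullMeasurableSet {z | z ∈ S (p z)} μ := by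
  have exists_rank (i : ι) : ∃ a : Set.Iio (ω₁ : Ordinal.{0}),
      S i ∈ MeasurableSpace.generateMeasurableRec C a.1 := by
    have hSi : S i ∈ {t | GenerateMeasurable C t} := hS i
    rw [generateMeasurable_eq_rec.{_, 0}, generateMeasurableRec_omega_one] at hSi
    simpa using hSi
  choose rank hrank using exists_rank
  have := uncountable_Iio_omega_one.{0}
  have hI (a : Set.Iio (ω₁ : Ordinal.{0})) : (Set.Iio a).Countable :=
    (countable_Iio_of_lt_omega_one a.2).preimage Subtype.val_injective
  obtain ⟨a, ha⟩ :=
    exists_measure_preimage_Ioi_eq_zero hI μ (r := rank ∘ p) fun A => hp (rank ⁻¹' A)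
  have low_rank_measurable : MeasurableSet {z | p z ∈ {i | rank i ≤ a} ∧ z ∈ S (p z)} :=
    hC.generateMeasurableRec hp a.2 _ S fun i hi => generateMeasurableRec_mono C hi (hrank i)
  refine low_rank_measurable.nullMeasurableSet.congr ?_
  have ae_low_rank : ∀ᵐ z ∂μ, rank (p z) ≤ a := by simpa [ae_iff, Set.preimage] using ha
  filter_upwards [ae_low_rank] with z hz
  exact propext (and_iff_right hz)

end GluesMeasurably

end Gluing

section LocallyFinite

variable {α ι : Type*} [PseudoEMetricSpace α] [MeasurableSpace α] [BorelSpace α]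

/-- Open sets being countable unions of closed sets, this reduces to a locally finite union of
closed sets, which is closed. -/
theorem measurableSet_iUnion_isOpen_inter_isClosed {W F : ι → Set α} (hW : LocallyFinite W)
    (hWo : ∀ i, IsOpen (W i)) (hF : ∀ i, IsClosed (F i)) : MeasurableSet (⋃ i, W i ∩ F i) := by
  choose K hK hKsub hKunion _ using fun i => (hWo i).exists_iUnion_isClosed
  have : ⋃ i, W i ∩ F i = ⋃ n, ⋃ i, K i n ∩ F i := by
    rw [Set.iUnion_comm]
    simp_rw [← Set.iUnion_inter, hKunion]
  rw [this]
  refine MeasurableSet.iUnion fun n => IsClosed.measurableSet ?_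
  exact (hW.subset fun i => Set.inter_subset_left.trans (hKsub i n)).isClosed_iUnion
    fun i => (hK i n).inter (hF i)

theorem exists_gluesMeasurably_isOpen_of_cover {U : ι → Set α} (hU : ∀ i, IsOpen (U i))
    (hcover : ⋃ i, U i = Set.univ) :
    ∃ p : α → ι, (∀ z, z ∈ U (p z)) ∧ GluesMeasurably p {O | IsOpen O} := by
  obtain ⟨V, hVo, hVcover, hVfin, hVU⟩ := precise_refinement U hU hcover
  obtain ⟨_, _⟩ := exists_wellFoundedLT ι
  have first_index (z : α) : ∃ i, z ∈ V i ∧ ∀ j < i, z ∉ V j := by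
    obtain ⟨i, hi, hmin⟩ :=
      wellFounded_lt.has_min {i | z ∈ V i} (Set.iUnion_eq_univ_iff.1 hVcover z)
    exact ⟨i, hi, fun j hj hz => hmin j hz hj⟩
  choose p hpV hpmin using first_index
  have p_eq_iff (z : α) (i : ι) : p z = i ↔ z ∈ V i ∧ ∀ j < i, z ∉ V j := by
    refine ⟨fun h => h ▸ ⟨hpV z, hpmin z⟩, fun ⟨hi, hmin⟩ => le_antisymm ?_ ?_⟩
    · exact not_lt.1 fun h => hpmin z i h hi
    · exact not_lt.1 fun h => hmin _ h (hpV z)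
  refine ⟨p, fun z => hVU _ (hpV z), fun J S hS => ?_⟩
  have hW (i : ι) : IsOpen {z ∈ V i | i ∈ J ∧ z ∈ S i} := by
    by_cases hi : i ∈ J
    · simpa [hi] using (hVo i).inter (hS i hi)
    · simp [hi]
  convert measurableSet_iUnion_isOpen_inter_isClosed (hVfin.subset fun i z hz => hz.1) hW
    fun i => (isOpen_biUnion fun j (_ : j < i) => hVo j).isClosed_compl
  ext z
  simp only [Set.mem_ofPred_eq, Set.mem_iUnion, Set.mem_inter_iff, Set.mem_compl_iff, exists_prop,
    not_exists, not_and]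
  constructor
  · rintro ⟨hJ, hz⟩
    exact ⟨p z, ⟨hpV z, hJ, hz⟩, hpmin z⟩
  · rintro ⟨i, ⟨hV, hJ, hz⟩, hmin⟩
    obtain rfl := (p_eq_iff z i).2 ⟨hV, hmin⟩
    exact ⟨hJ, hz⟩

end LocallyFinite

section Graph

variable {α β : Type*} [PseudoMetricSpace α] [MeasurableSpace α] [BorelSpace α] {g : α → β}

theorem nullMeasurableSet_graph_mem_of_isOpen [TopologicalSpace β] [MeasurableSpace β]
    [OpensMeasurableSpace β] (hg : Measurable g) (μ : Measure α) [SFinite μ] {W : Set (α × β)}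
    (hW : IsOpen W) : NullMeasurableSet {z | (z, g z) ∈ W} μ := by
  have hpos (n : ℕ) : (0 : ℝ) < 1 / (n + 1) := Nat.one_div_pos_of_nat
  choose p hp hglue using fun n : ℕ =>
    exists_gluesMeasurably_isOpen_of_cover (fun x : α => isOpen_ball (x := x) (ε := 1 / (n + 1)))
      (Set.iUnion_eq_univ_iff.2 fun z => ⟨z, mem_ball_self (hpos n)⟩)
  let O (n : ℕ) (x : α) : Set β := ⋃₀ {N | IsOpen N ∧ ball x (1 / (n + 1)) ×ˢ N ⊆ W}
  have hO (n : ℕ) (x : α) : IsOpen (O n x) := isOpen_sUnion fun N hN => hN.1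
  have graph_eq : {z | (z, g z) ∈ W} = ⋃ n, {z | z ∈ g ⁻¹' O n (p n z)} := by
    ext z
    simp only [Set.mem_ofPred_eq, Set.mem_iUnion, Set.mem_preimage]
    constructor
    · intro hz
      obtain ⟨A, N, hA, hzA, hN, hgN, hAN⟩ := mem_nhds_prod_iff'.1 (hW.mem_nhds hz)
      obtain ⟨δ, hδ, hδA⟩ := Metric.isOpen_iff.1 hA z hzA
      obtain ⟨n, hn⟩ := exists_nat_one_div_lt (half_pos hδ)
      have ball_subset : ball (p n z) (1 / (n + 1)) ⊆ A := by
        refine (ball_subset_ball' ?_).trans hδA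
        linarith [mem_ball'.1 (hp n z)]
      exact ⟨n, N, ⟨hN, (Set.prod_mono_left ball_subset).trans hAN⟩, hgN⟩
    · rintro ⟨n, N, ⟨-, hNW⟩, hgN⟩
      exact hNW ⟨hp n z, hgN⟩
  rw [graph_eq]
  refine NullMeasurableSet.iUnion fun n => (hglue n).nullMeasurableSet
    ((hglue n).measurableSet_preimage isOpen_univ) μ (S := fun x => g ⁻¹' O n x) fun x => ?_
  have hpreimage : MeasurableSet (g ⁻¹' O n x) := hg (hO n x).measurableSet
  rwa [BorelSpace.measurable_eq (α := α)] at hpreimage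

theorem nullMeasurableSet_dist_map_self_le {g : α → α} (hg : Measurable g) (μ : Measure α)
    [SFinite μ] (ε : ℝ) : NullMeasurableSet {z | dist (g z) z ≤ ε} μ := by
  have hW : IsOpen {q : α × α | ε < dist q.2 q.1} :=
    isOpen_lt continuous_const (continuous_snd.dist continuous_fst)
  simpa [Set.compl_ofPred] using (nullMeasurableSet_graph_mem_of_isOpen hg μ hW).compl

end Graph

section Disintegration

variable {α : Type*} [MeasurableSpace α] {μ : Measure α}

theorem lintegral_le_measure_add {f : α → ENNReal} (hf : ∀ x, f x ≤ 1) {A : Set α} {K : ENNReal}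
    (hK : ∀ x ∉ A, f x ≤ K) : ∫⁻ x, f x ∂μ ≤ μ A + K * μ Set.univ := by
  have pointwise (x : α) : f x ≤ A.indicator (fun _ => 1) x + K := by
    by_cases hx : x ∈ A
    · simpa [hx] using (hf x).trans le_self_add
    · simpa [hx] using hK x hx
  calc ∫⁻ x, f x ∂μ ≤ ∫⁻ x, A.indicator (fun _ => 1) x + K ∂μ := lintegral_mono pointwise
    _ = ∫⁻ x, A.indicator (fun _ => 1) x ∂μ + K * μ Set.univ := by
      rw [lintegral_add_right _ measurable_const, lintegral_const]
    _ ≤ μ A + K * μ Set.univ := by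
      gcongr
      simpa using lintegral_indicator_const_le (μ := μ) A 1

theorem measure_le_add_of_disintegration {κ : α → Measure α} [∀ x, IsProbabilityMeasure (κ x)]
    (hκ : ∀ S, MeasurableSet S → μ S = ∫⁻ x, κ x S ∂μ) {E : Set α} (hE : NullMeasurableSet E μ)
    {A : Set α} {K : ENNReal} (hK : ∀ x ∉ A, ∀ B ⊆ E, MeasurableSet B → κ x B ≤ K) :
    μ E ≤ μ A + K * μ Set.univ := by
  obtain ⟨B, hBE, hB, hBae⟩ := hE.exists_measurable_subset_ae_eq
  rw [← measure_congr hBae, hκ B hB]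
  exact lintegral_le_measure_add (fun _ => prob_le_one) fun x hx => hK x hx B hBE hB

end Disintegration

theorem isBounded_and_diam_le_of_dist_map_self_le {α : Type*} [PseudoMetricSpace α] {g : α → α}
    {A : Set α} {c ε : ℝ} (hc : c < 1) (hε : 0 ≤ ε)
    (hg : ∀ y ∈ A, ∀ y' ∈ A, dist (g y) (g y') ≤ c * dist y y')
    (hA : ∀ y ∈ A, dist (g y) y ≤ ε) :
    Bornology.IsBounded A ∧ diam A ≤ 2 / (1 - c) * ε := by
  have hc' : 0 < 1 - c := sub_pos.2 hc
  have hdist : ∀ y ∈ A, ∀ y' ∈ A, dist y y' ≤ 2 / (1 - c) * ε := by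
    intro y hy y' hy'
    have triangle := dist_triangle4 y (g y) (g y') y'
    rw [dist_comm y (g y)] at triangle
    rw [div_mul_eq_mul_div, le_div_iff₀ hc']
    linarith [hg y hy y' hy', hA y hy, hA y' hy']
  exact ⟨isBounded_iff.2 ⟨_, fun _ hy _ => hdist _ hy _⟩,
    diam_le_of_forall_dist_le (by positivity) hdist⟩

theorem rpow_add_mul_div_rpow_of_balanced {ε M b k : ℝ} (hε : 0 < ε) (hM : 0 ≤ M)
    (hbk : b + k ≠ 0) :
    (ε ^ (k / (b + k))) ^ b + (M * ε / ε ^ (k / (b + k))) ^ k =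
      (1 + M ^ k) * ε ^ (b * k / (b + k)) := by
  have short : (ε ^ (k / (b + k))) ^ b = ε ^ (b * k / (b + k)) := by
    rw [← Real.rpow_mul hε.le, div_mul_eq_mul_div, mul_comm k b]
  have long : (ε / ε ^ (k / (b + k))) ^ k = ε ^ (b * k / (b + k)) := by
    have exponent : 1 - k / (b + k) = b / (b + k) := by
      field_simp
      ring
    have quotient : ε / ε ^ (k / (b + k)) = ε ^ (b / (b + k)) := by
      rw [← exponent, Real.rpow_sub hε, Real.rpow_one]
    rw [quotient, ← Real.rpow_mul hε.le, div_mul_eq_mul_div]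
  rw [mul_div_assoc, Real.mul_rpow hM (by positivity), short, long]
  ring

theorem recurrence_bound_induced_partition_general {U : Type*} [PseudoMetricSpace U]
    [MeasurableSpace U] [BorelSpace U] (μ : Measure U) [IsProbabilityMeasure μ]
    (g : U → U) (hg : Measurable g) (ℓ : U → ℝ)
    (μx : U → Measure U) (hμxprob : ∀ x, IsProbabilityMeasure (μx x))
    (hdisint : ∀ S : Set U, MeasurableSet S → μ S = ∫⁻ x, μx x S ∂μ)
    (C b k c : ℝ) (hC : 0 ≤ C) (hb : 0 < b) (hk : 0 < k) (hc : c < 1)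
    (Γ : U → Set U) (hΓmeas : ∀ x, MeasurableSet (Γ x)) (hΓfull : ∀ x, μx x (Γ x) = 1)
    (hi : ∀ ε : ℝ, 0 < ε → ε < 1 → μ {x | ℓ x < ε} ≤ ENNReal.ofReal (C * ε ^ b))
    (hii : ∀ x : U, ∀ y ∈ Γ x, ∀ y' ∈ Γ x, dist (g y) (g y') ≤ c * dist y y')
    (hiii : ∀ x : U, ∀ δ : ℝ, 0 < δ → ∀ S : Set U, MeasurableSet S → Bornology.IsBounded S →
      diam S ≤ δ → μx x S ≤ ENNReal.ofReal (C * (δ / ℓ x) ^ k)) :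
    ∀ ε : ℝ, 0 < ε → ε < 1 →
      μ {z | dist (g z) z ≤ ε} ≤
        ENNReal.ofReal (C * (1 + (2 / (1 - c)) ^ k) * ε ^ (b * k / (b + k))) := by
  intro ε hε hε1
  have hM : 0 < 2 / (1 - c) := div_pos two_pos (sub_pos.2 hc)
  have leaf_bound (x : U) (B : Set U) (hBE : B ⊆ {z | dist (g z) z ≤ ε}) (hB : MeasurableSet B) :
      μx x B ≤ ENNReal.ofReal (C * (2 / (1 - c) * ε / ℓ x) ^ k) := by
    obtain ⟨hbounded, hdiam⟩ := isBounded_and_diam_le_of_dist_map_self_le (A := B ∩ Γ x) hc hε.le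
      (fun y hy y' hy' => hii x y hy.2 y' hy'.2) fun y hy => hBE hy.1
    rw [← measure_inter_conull ((prob_compl_eq_zero_iff (hΓmeas x)).2 (hΓfull x))]
    exact hiii x _ (by positivity) _ (hB.inter (hΓmeas x)) hbounded hdiam
  set t : ℝ := ε ^ (k / (b + k))
  have ht0 : 0 < t := Real.rpow_pos_of_pos hε _
  have ht1 : t < 1 := Real.rpow_lt_one hε.le hε1 (by positivity)
  calc μ {z | dist (g z) z ≤ ε}
      ≤ μ {x | ℓ x < t} + ENNReal.ofReal (C * (2 / (1 - c) * ε / t) ^ k) * μ Set.univ := by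
        refine measure_le_add_of_disintegration hdisint
          (nullMeasurableSet_dist_map_self_le hg μ ε) fun x hx B hBE hB => ?_
        refine (leaf_bound x B hBE hB).trans (ENNReal.ofReal_le_ofReal ?_)
        have htℓ : t ≤ ℓ x := not_lt.1 hx
        have hℓ : 0 < ℓ x := ht0.trans_le htℓ
        gcongr
    _ ≤ ENNReal.ofReal (C * t ^ b) + ENNReal.ofReal (C * (2 / (1 - c) * ε / t) ^ k) := by
        rw [measure_univ, mul_one]
        gcongr
        exact hi t ht0 ht1
    _ = ENNReal.ofReal (C * (1 + (2 / (1 - c)) ^ k) * ε ^ (b * k / (b + k))) := by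
        rw [← ENNReal.ofReal_add (by positivity) (by positivity), ← mul_add,
          rpow_add_mul_div_rpow_of_balanced hε hM.le (by positivity), mul_assoc]

/-- **Recurrence bound via an induced measurable partition.**
Let `(U, d)` be a metric space, `μ` a Borel probability measure, `g : U → U` Borel,
`ℓ : U → (0, ∞)` measurable, and `(μ_x)` a disintegration of `μ`.  Let `C ≥ 1`, `b > 0`,
`k > 0`, `c ∈ [0, 1/2]` and `(Γ x)` Borel sets with `μ_x (Γ x) = 1`.  Assume
(i) `μ {ℓ < ε} ≤ C ε^b` for `ε ∈ (0,1)`; (ii) `g` is `c`-Lipschitz on each `Γ x`;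
(iii) `μ_x S ≤ C (δ / ℓ x)^k` whenever `diam S ≤ δ`.  Then for every `ε ∈ (0,1)`,
`μ {z : d(g z, z) ≤ ε} ≤ C (1 + 4^k) ε^{bk/(b+k)}`. -/
theorem recurrence_bound_induced_partition {U : Type*} [MetricSpace U] [MeasurableSpace U]
    [BorelSpace U] (μ : Measure U) [IsProbabilityMeasure μ]
    (g : U → U) (hg : Measurable g)
    (ℓ : U → ℝ) (hℓmeas : Measurable ℓ) (hℓpos : ∀ x, 0 < ℓ x)
    (μx : U → Measure U) (hμxprob : ∀ x, IsProbabilityMeasure (μx x))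
    (hdisint : ∀ S : Set U, MeasurableSet S → μ S = ∫⁻ x, μx x S ∂μ)
    (C b k c : ℝ) (hC : 1 ≤ C) (hb : 0 < b) (hk : 0 < k) (hc0 : 0 ≤ c) (hc : c ≤ 1 / 2)
    (Γ : U → Set U) (hΓmeas : ∀ x, MeasurableSet (Γ x)) (hΓfull : ∀ x, μx x (Γ x) = 1)
    (hi : ∀ ε : ℝ, 0 < ε → ε < 1 → μ {x | ℓ x < ε} ≤ ENNReal.ofReal (C * ε ^ b))
    (hii : ∀ x : U, ∀ y ∈ Γ x, ∀ y' ∈ Γ x, dist (g y) (g y') ≤ c * dist y y')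
    (hiii : ∀ x : U, ∀ δ : ℝ, 0 < δ → ∀ S : Set U, MeasurableSet S → diam S ≤ δ →
      μx x S ≤ ENNReal.ofReal (C * (δ / ℓ x) ^ k)) :
    ∀ ε : ℝ, 0 < ε → ε < 1 →
      μ {z | dist (g z) z ≤ ε} ≤
        ENNReal.ofReal (C * (1 + 4 ^ k) * ε ^ (b * k / (b + k))) := by
  intro ε hε hε1
  refine (recurrence_bound_induced_partition_general μ g hg ℓ μx hμxprob hdisint C b k c
    (by linarith) hb hk (by linarith) Γ hΓmeas hΓfull hi hii
    (fun x δ hδ S hS _ => hiii x δ hδ S hS) ε hε hε1).trans (ENNReal.ofReal_le_ofReal ?_)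
  have hM : 0 ≤ 2 / (1 - c) := div_nonneg zero_le_two (by linarith)
  have hM4 : 2 / (1 - c) ≤ 4 := (div_le_iff₀ (by linarith)).2 (by linarith)
  gcongr
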